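/- If R is a quasilocal commutative ring whose maximal ideal equals the nilradical √0, then every proper ideal of R is a weakly 1-absorbing primary ideal of R. -/

import Mathlib

open Ideal

def IsWeakly1AbsorbingPrimary {R : Type*} [CommRing R] (I : Ideal R) : Prop :=
  I ≠ ⊤ ∧ ∀ a b c : R, ¬IsUnit a → ¬IsUnit b → ¬IsUnit c →
    a * b * c ∈ I → a * b * c ≠ 0 → a * b ∈ I ∨ c ∈ I.radical

def IsWeaklyPrimary {R : Type*} [CommRing R] (I : Ideal R) : Prop :=
  I ≠ ⊤ ∧ ∀ a b : R, a * b ∈ I → a * b ≠ 0 → a ∈ I ∨ b ∈ I.radical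

def IsWeaklyPrime {R : Type*} [CommRing R] (I : Ideal R) : Prop :=
  I ≠ ⊤ ∧ ∀ a b : R, a * b ∈ I → a * b ≠ 0 → a ∈ I ∨ b ∈ I

theorem stmt2 {R : Type*} [CommRing R] [Nontrivial R]
    (hql : ∃! M : Ideal R, M.IsMaximal)
    (hmax : ∀ M : Ideal R, M.IsMaximal → M = nilradical R)
    (I : Ideal R) (hI : I ≠ ⊤) : IsWeakly1AbsorbingPrimary I := by
  -- A nonunit lies in some maximal ideal, hence is nilpotent, hence is in every radical ideal.
  refine ⟨hI, fun a b c _ _ hc _ _ => Or.inr ?_⟩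
  obtain ⟨M, hM, hcM⟩ := exists_max_ideal_of_mem_nonunits hc
  rw [hmax M hM] at hcM
  exact Ideal.radical_mono bot_le hcM
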